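/- Let k ≥ 1, r ≥ 2k+1 and n ≥ 3k+1 be integers, let A be an r×n sign matrix, and let P be a plain travel of A. If P makes a downward move from row r−2k+1 to row r−2k+2 at a column j ≤ n−3k+2, then P is not k-neighborly. -/

import Mathlib

/-- An `r × n` sign matrix: entries in `{+1, -1}` (1-indexed: `1 ≤ i ≤ r`, `1 ≤ j ≤ n`). -/
def IsSignMatrix (r n : ℕ) (A : ℕ → ℕ → ℤ) : Prop :=
  ∀ i j, 1 ≤ i → i ≤ r → 1 ≤ j → j ≤ n → A i j = 1 ∨ A i j = -1

/-- `A_S`: the matrix obtained from `A` by negating every entry of each column in `S`. -/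
def reorient (A : ℕ → ℕ → ℤ) (S : Finset ℕ) : ℕ → ℕ → ℤ :=
  fun i j => if j ∈ S then -A i j else A i j

/-- The first column `c'` with `c < c' ≤ n` where row `i` changes sign relative to
entry `a_{i,c}`, if such a column exists. -/
def rowChange (A : ℕ → ℕ → ℤ) (n i c : ℕ) : Option ℕ :=
  (List.range (n + 1)).find? fun c' => decide (c < c' ∧ A i c' ≠ A i c)

/-- `ttEntry A n i` is the column at which the top travel of `A` enters row `i`
(rows and columns 1-indexed): the travel enters row 1 at column 1, and, having entered
row `i` at column `c`, it enters row `i+1` at the first sign change of row `i` after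
column `c` (if any).  The value `some` at the "virtual" row `r+1` means the top travel
had a sign change in the bottom row `r`, i.e. the top travel is positive. -/
def ttEntry (A : ℕ → ℕ → ℤ) (n : ℕ) : ℕ → Option ℕ
  | 0 => none
  | 1 => some 1
  | i + 2 => (ttEntry A n (i + 1)).bind (rowChange A n (i + 1))

/-- The top travel of the `r × n` sign matrix `A` is positive: it contains two
horizontally consecutive entries of row `r` with opposite signs. -/
def ttPositive (A : ℕ → ℕ → ℤ) (r n : ℕ) : Prop :=
  (ttEntry A n (r + 1)).isSome

/-- `A` is `k`-neighborly: for every set `S` of at most `k` columns, the top travel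
of `A_S` is not positive. -/
def IsNeighborly (A : ℕ → ℕ → ℤ) (r n k : ℕ) : Prop :=
  ∀ S : Finset ℕ, S ⊆ Finset.Icc 1 n → S.card ≤ k → ¬ ttPositive (reorient A S) r n

/-- A plain travel of an `r × n` sign matrix, identified with the set `D` of columns of
its downward (vertical) moves: the columns `2 ≤ j₁ < ⋯ < j_{s-1} ≤ n` with `s ≤ r`. -/
def IsPlainTravel (r n : ℕ) (D : Finset ℕ) : Prop :=
  D ⊆ Finset.Icc 2 n ∧ D.card ≤ r - 1

/-- The top travel of `A` follows exactly the plain travel with downward-move columns `D`: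
it makes its downward moves precisely at the columns of `D` (entering rows `2, …, |D|+1`
there) and then ends at column `n` in row `|D|+1` without a further sign change. -/
def ttFollows (A : ℕ → ℕ → ℤ) (n : ℕ) (D : Finset ℕ) : Prop :=
  ttEntry A n (D.card + 2) = none ∧
  ∀ c, c ∈ D ↔ ∃ i, 2 ≤ i ∧ i ≤ D.card + 1 ∧ ttEntry A n i = some c

/-- The plain travel `D` of `A` is `k`-neighborly: there is a set `R` of columns such that
the top travel of `A_R` follows exactly the path `D` and `A_R` is a `k`-neighborly matrix. -/
def IsNeighborlyTravel (A : ℕ → ℕ → ℤ) (r n k : ℕ) (D : Finset ℕ) : Prop :=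
  ∃ R : Finset ℕ, R ⊆ Finset.Icc 1 n ∧ ttFollows (reorient A R) n D ∧
    IsNeighborly (reorient A R) r n k

/-!
One sign flip suffices to pass two rows of the top travel within three columns. Suppose the travel
enters row `i` at column `c`. If row `i` has a sign change at `d ≤ c + 2`, the travel enters row
`i + 1` at `d`, and flipping column `d + 1` if necessary makes it leave row `i + 1` there. Otherwise
flipping `c + 1` or `c + 2` makes the travel enter row `i + 1` at that column. Flipping `c + 2`
creates a sign change of row `i + 1` at `c + 3` when its entries at `c + 2` and `c + 3` agree; when
they disagree, flip `c + 1`, and one of the two differs from the flipped entry at `c + 1`.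

Starting from row `r - 2k + 2` and iterating `k - 1` times, the travel reaches row `r` no later than
column `n - 1`, and a `k`-th flip then forces a sign change in row `r`.
-/

theorem IsSignMatrix.ne_zero {A : ℕ → ℕ → ℤ} {r n i j : ℕ} (hA : IsSignMatrix r n A)
    (hi : i ∈ Set.Icc 1 r) (hj : j ∈ Set.Icc 1 n) : A i j ≠ 0 := by
  have := hA i j hi.1 hi.2 hj.1 hj.2
  omega

section Reorient

variable (A : ℕ → ℕ → ℤ) {S : Finset ℕ} {j : ℕ}

theorem reorient_of_mem (hj : j ∈ S) (i : ℕ) : reorient A S i j = -A i j :=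
  if_pos hj

theorem reorient_of_notMem (hj : j ∉ S) (i : ℕ) : reorient A S i j = A i j :=
  if_neg hj

theorem reorient_empty : reorient A ∅ = A := by
  ext i j
  exact reorient_of_notMem A (Finset.notMem_empty j) i

theorem reorient_reorient (S T : Finset ℕ) :
    reorient (reorient A S) T = reorient A (symmDiff S T) := by
  ext i j
  by_cases hS : j ∈ S <;> by_cases hT : j ∈ T <;> simp [reorient, Finset.mem_symmDiff, hS, hT]

variable {A}

theorem IsSignMatrix.reorient {r n : ℕ} (hA : IsSignMatrix r n A) (S : Finset ℕ) :
    IsSignMatrix r n (reorient A S) := by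
  intro i j hi hir hj hjn
  have := hA i j hi hir hj hjn
  by_cases hS : j ∈ S
  · rw [reorient_of_mem A hS]
    omega
  · rwa [reorient_of_notMem A hS]

end Reorient

section TopTravel

variable {A B : ℕ → ℕ → ℤ} {n i c d : ℕ} {S : Finset ℕ}

theorem rowChange_eq_some_iff :
    rowChange A n i c = some d ↔
      c < d ∧ d ≤ n ∧ A i d ≠ A i c ∧ ∀ x ∈ Set.Ioo c d, A i x = A i c := by
  simp only [rowChange, List.find?_range_eq_some, decide_eq_true_eq, List.mem_range,
    Bool.not_eq_true', decide_eq_false_iff_not, Set.mem_Ioo]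
  grind

theorem ttEntry_succ_eq_some_iff (hi : 1 ≤ i) :
    ttEntry A n (i + 1) = some d ↔ ∃ c, ttEntry A n i = some c ∧
      c < d ∧ d ≤ n ∧ A i d ≠ A i c ∧ ∀ x ∈ Set.Ioo c d, A i x = A i c := by
  obtain ⟨i, rfl⟩ := Nat.exists_eq_add_of_le' hi
  simp only [ttEntry, Option.bind_eq_some_iff, rowChange_eq_some_iff]

theorem ttEntry_succ_of_change (hi : 1 ≤ i) (h : ttEntry A n i = some c) (hcd : c < d)
    (hdn : d ≤ n) (hne : A i d ≠ A i c) (hconst : ∀ x ∈ Set.Ioo c d, A i x = A i c) :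
    ttEntry A n (i + 1) = some d :=
  (ttEntry_succ_eq_some_iff hi).2 ⟨c, h, hcd, hdn, hne, hconst⟩

theorem exists_ttEntry_lt_of_lt {i' : ℕ} (hi : 1 ≤ i) (hii' : i < i')
    (h : ttEntry A n i' = some d) : ∃ c < d, ttEntry A n i = some c := by
  induction i', hii' using Nat.le_induction generalizing d with
  | base =>
    obtain ⟨c, hc, hcd, -⟩ := (ttEntry_succ_eq_some_iff hi).1 h
    exact ⟨c, hcd, hc⟩
  | succ i' hii' ih =>
    obtain ⟨e, he, hed, -⟩ := (ttEntry_succ_eq_some_iff (by omega)).1 h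
    obtain ⟨c, hce, hc⟩ := ih he
    exact ⟨c, hce.trans hed, hc⟩

theorem one_le_of_ttEntry_eq_some (h : ttEntry A n i = some c) : 1 ≤ c := by
  match i, h with
  | 1, h => exact (Option.some.inj h).le
  | i + 2, h =>
    obtain ⟨b, hbc, -⟩ := exists_ttEntry_lt_of_lt le_rfl (by omega) h
    omega

theorem ttEntry_eq_some_of_eqOn (hAB : ∀ a, Set.EqOn (A a) (B a) (Set.Iic c))
    (h : ttEntry A n i = some c) : ttEntry B n i = some c := by
  induction i generalizing c with
  | zero => exact h
  | succ i ih =>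
    rcases Nat.eq_zero_or_pos i with rfl | hi
    · exact h
    · obtain ⟨b, hb, hbc, hcn, hne, hconst⟩ := (ttEntry_succ_eq_some_iff hi).1 h
      have hbB : ttEntry B n i = some b :=
        ih (fun a => (hAB a).mono (Set.Iic_subset_Iic.2 hbc.le)) hb
      refine ttEntry_succ_of_change hi hbB hbc hcn ?_ fun x hx => ?_
      · rwa [← hAB i Set.self_mem_Iic, ← hAB i hbc.le]
      · rw [← hAB i hx.2.le, ← hAB i hbc.le, hconst x hx]

theorem ttEntry_reorient_of_forall_lt (hS : ∀ x ∈ S, c < x) (h : ttEntry A n i = some c) :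
    ttEntry (reorient A S) n i = some c :=
  ttEntry_eq_some_of_eqOn
    (fun a x hx => (reorient_of_notMem A (fun hxS => (hS x hxS).not_ge hx) a).symm) h

theorem ttEntry_reorient_singleton_succ (hi : 1 ≤ i) (h : ttEntry A n i = some c) (hcd : c < d)
    (hdn : d ≤ n) (h0 : A i c ≠ 0) (hconst : ∀ x ∈ Set.Ioc c d, A i x = A i c) :
    ttEntry (reorient A {d}) n (i + 1) = some d := by
  have heq : ∀ x < d, reorient A {d} i x = A i x := fun x hx =>
    reorient_of_notMem A (by simpa using hx.ne) i
  refine ttEntry_succ_of_change hi (ttEntry_reorient_of_forall_lt (by simpa) h) hcd hdn ?_ ?_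
  · rw [heq c hcd, reorient_of_mem A (Finset.mem_singleton_self d), hconst d ⟨hcd, le_rfl⟩]
    omega
  · intro x hx
    rw [heq c hcd, heq x hx.2, hconst x ⟨hx.1, hx.2.le⟩]

theorem exists_strictMonoOn_ttEntry (h : ttEntry A n i = some c) :
    ∃ e : ℕ → ℕ, StrictMonoOn e (Set.Icc 1 i) ∧ ∀ a ∈ Set.Icc 1 i, ttEntry A n a = some (e a) := by
  have hexists : ∀ a ∈ Set.Icc 1 i, ∃ b, ttEntry A n a = some b := by
    rintro a ⟨ha, hai⟩
    rcases hai.eq_or_lt with rfl | hlt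
    · exact ⟨c, h⟩
    · obtain ⟨b, -, hb⟩ := exists_ttEntry_lt_of_lt ha hlt h
      exact ⟨b, hb⟩
  choose! e he using hexists
  refine ⟨e, fun a ha b hb hab => ?_, he⟩
  obtain ⟨x, hx, hax⟩ := exists_ttEntry_lt_of_lt ha.1 hab (he b hb)
  rwa [Option.some.inj ((he a ha).symm.trans hax)]

theorem ttFollows.ttEntry_eq_some {D : Finset ℕ} (hD : ttFollows A n D) {j : ℕ} (hj : j ∈ D) :
    ttEntry A n ((D.filter (fun c => c ≤ j)).card + 1) = some j := by
  obtain ⟨i, hi2, hiD, hij⟩ := (hD.2 j).1 hj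
  obtain ⟨e, he_mono, he⟩ := exists_strictMonoOn_ttEntry hij
  have he_last : e i = j := Option.some.inj ((he i ⟨by omega, le_rfl⟩).symm.trans hij)
  have hfilter : D.filter (fun c => c ≤ j) = (Finset.Icc 2 i).image e := by
    ext x
    simp only [Finset.mem_filter, Finset.mem_image, Finset.mem_Icc]
    constructor
    · rintro ⟨hxD, hxj⟩
      obtain ⟨a, ha2, -, hax⟩ := (hD.2 x).1 hxD
      have hai : a ≤ i := by
        by_contra! hlt
        obtain ⟨c, hcx, hc⟩ := exists_ttEntry_lt_of_lt (by omega) hlt hax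
        have : c = j := Option.some.inj (hc.symm.trans hij)
        omega
      exact ⟨a, ⟨ha2, hai⟩, Option.some.inj ((he a ⟨by omega, hai⟩).symm.trans hax)⟩
    · rintro ⟨a, ⟨ha2, hai⟩, rfl⟩
      have ha : a ∈ Set.Icc 1 i := ⟨by omega, hai⟩
      refine ⟨(hD.2 _).2 ⟨a, ha2, hai.trans hiD, he a ha⟩, ?_⟩
      rw [← he_last]
      exact he_mono.monotoneOn ha ⟨by omega, le_rfl⟩ hai
  have he_inj : Set.InjOn e (Finset.Icc 2 i) :=
    he_mono.injOn.mono (by rw [Finset.coe_Icc]; exact Set.Icc_subset_Icc_left one_le_two)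
  have hcard : (D.filter (fun c => c ≤ j)).card + 1 = i := by
    rw [hfilter, Finset.card_image_of_injOn he_inj, Nat.card_Icc]
    omega
  rwa [hcard]

end TopTravel

/-- Flipping at most `m` of the `n` columns can make the top travel of `A` enter row `i` at column
`c`. Reaching the virtual row `r + 1` this way with `m = k` refutes `k`-neighborliness. -/
def CanEnter (A : ℕ → ℕ → ℤ) (n m i c : ℕ) : Prop :=
  ∃ S ⊆ Finset.Icc 1 n, S.card ≤ m ∧ ttEntry (reorient A S) n i = some c

section CanEnter

variable {A : ℕ → ℕ → ℤ} {r n m m' i c c' d t : ℕ} {S : Finset ℕ}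

theorem canEnter_of_ttEntry (h : ttEntry A n i = some c) : CanEnter A n m i c :=
  ⟨∅, Finset.empty_subset _, Nat.zero_le m, by rwa [reorient_empty]⟩

theorem CanEnter.of_reorient (hS : S ⊆ Finset.Icc 1 n) (hSm : S.card ≤ m)
    (h : CanEnter (reorient A S) n m' i c) : CanEnter A n (m + m') i c := by
  obtain ⟨T, hT, hTm, hentry⟩ := h
  have hunion : symmDiff S T ⊆ S ∪ T := symmDiff_le_sup
  refine ⟨symmDiff S T, hunion.trans (Finset.union_subset hS hT), ?_, ?_⟩
  · calc (symmDiff S T).card ≤ (S ∪ T).card := Finset.card_le_card hunion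
      _ ≤ S.card + T.card := Finset.card_union_le S T
      _ ≤ m + m' := Nat.add_le_add hSm hTm
  · rwa [← reorient_reorient]

theorem CanEnter.of_reorient_singleton (hd : d ∈ Finset.Icc 1 n)
    (h : ttEntry (reorient A {d}) n i = some c) : CanEnter A n 1 i c :=
  ⟨{d}, Finset.singleton_subset_iff.2 hd, (Finset.card_singleton d).le, h⟩

theorem CanEnter.not_isNeighborly (h : CanEnter A n m (r + 1) c) : ¬ IsNeighborly A r n m := by
  obtain ⟨S, hS, hSm, hentry⟩ := h
  exact fun hA => hA S hS hSm (Option.isSome_iff_exists.2 ⟨c, hentry⟩)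

theorem canEnter_succ_of_const (hi : 1 ≤ i) (h : ttEntry A n i = some c) (hcd : c < d)
    (hdn : d ≤ n) (h0 : A i c ≠ 0) (hconst : ∀ x ∈ Set.Ioo c d, A i x = A i c) :
    CanEnter A n 1 (i + 1) d := by
  by_cases hd : A i d = A i c
  · refine CanEnter.of_reorient_singleton (Finset.mem_Icc.2 ⟨by omega, hdn⟩)
      (ttEntry_reorient_singleton_succ hi h hcd hdn h0 fun x hx => ?_)
    rcases hx.2.eq_or_lt with rfl | hxd
    exacts [hd, hconst x ⟨hx.1, hxd⟩]
  · exact canEnter_of_ttEntry (ttEntry_succ_of_change hi h hcd hdn hd hconst)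

theorem canEnter_add_two_of_flip (hi : 1 ≤ i) (h : ttEntry A n i = some c) (hcd : c < d)
    (hdc' : d < c') (hcn : c' ≤ n) (h0 : A i c ≠ 0) (hconst : ∀ x ∈ Set.Ioc c d, A i x = A i c)
    (hne : A (i + 1) c' ≠ -A (i + 1) d)
    (hconst' : ∀ x ∈ Set.Ioo d c', A (i + 1) x = -A (i + 1) d) :
    CanEnter A n 1 (i + 2) c' := by
  have hentry : ttEntry (reorient A {d}) n (i + 1) = some d :=
    ttEntry_reorient_singleton_succ hi h hcd (by omega) h0 hconst
  have hd : reorient A {d} (i + 1) d = -A (i + 1) d :=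
    reorient_of_mem A (Finset.mem_singleton_self d) (i + 1)
  have hgt : ∀ x, d < x → reorient A {d} (i + 1) x = A (i + 1) x := fun x hx =>
    reorient_of_notMem A (by simpa using hx.ne') (i + 1)
  refine CanEnter.of_reorient_singleton (Finset.mem_Icc.2 ⟨by omega, by omega⟩)
    (ttEntry_succ_of_change (by omega) hentry hdc' hcn ?_ fun x hx => ?_)
  · rwa [hgt c' hdc', hd]
  · rw [hgt x hx.1, hd, hconst' x hx]

theorem canEnter_add_two_of_change (hi : 1 ≤ i) (h : ttEntry A n i = some c) (hcd : c < d)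
    (hdn : d + 1 ≤ n) (h0 : A (i + 1) d ≠ 0) (hne : A i d ≠ A i c)
    (hconst : ∀ x ∈ Set.Ioo c d, A i x = A i c) :
    CanEnter A n 1 (i + 2) (d + 1) :=
  canEnter_succ_of_const (by omega) (ttEntry_succ_of_change hi h hcd (by omega) hne hconst)
    (by omega) hdn h0 (by grind)

theorem exists_canEnter_add_two_of_const (hi : 1 ≤ i) (h : ttEntry A n i = some c)
    (hcn : c + 3 ≤ n) (h0 : A i c ≠ 0) (h0' : A (i + 1) (c + 2) ≠ 0) (h1 : A i (c + 1) = A i c)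
    (h2 : A i (c + 2) = A i c) :
    ∃ c' ≤ c + 3, CanEnter A n 1 (i + 2) c' := by
  by_cases h23 : A (i + 1) (c + 2) = A (i + 1) (c + 3)
  · exact ⟨c + 3, le_rfl, canEnter_add_two_of_flip (d := c + 2) hi h (by omega) (by omega) hcn h0
      (by grind) (by omega) (by grind)⟩
  by_cases h12 : A (i + 1) (c + 2) = -A (i + 1) (c + 1)
  · exact ⟨c + 3, le_rfl, canEnter_add_two_of_flip (d := c + 1) hi h (by omega) (by omega) hcn h0
      (by grind) (by omega) (by grind)⟩
  · exact ⟨c + 2, by omega, canEnter_add_two_of_flip (d := c + 1) hi h (by omega) (by omega)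
      (by omega) h0 (by grind) h12 (by grind)⟩

theorem exists_canEnter_add_two (hA : IsSignMatrix (i + 1) n A) (hi : 1 ≤ i)
    (h : ttEntry A n i = some c) (hcn : c + 3 ≤ n) :
    ∃ c' ≤ c + 3, CanEnter A n 1 (i + 2) c' := by
  have hc := one_le_of_ttEntry_eq_some h
  have h0 : A i c ≠ 0 := hA.ne_zero ⟨hi, by omega⟩ ⟨hc, by omega⟩
  have h0' : ∀ d ∈ Set.Icc 1 n, A (i + 1) d ≠ 0 := fun d hd => hA.ne_zero ⟨by omega, le_rfl⟩ hd
  by_cases h1 : A i (c + 1) = A i c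
  · by_cases h2 : A i (c + 2) = A i c
    · exact exists_canEnter_add_two_of_const hi h hcn h0 (h0' _ ⟨by omega, by omega⟩) h1 h2
    · exact ⟨c + 3, le_rfl, canEnter_add_two_of_change hi h (by omega) hcn
        (h0' _ ⟨by omega, by omega⟩) h2 (by grind)⟩
  · exact ⟨c + 2, by omega, canEnter_add_two_of_change hi h (by omega) (by omega)
      (h0' _ ⟨by omega, by omega⟩) h1 (by grind)⟩

theorem exists_canEnter_add_two_mul (hA : IsSignMatrix (i + 2 * t) n A) (hi : 1 ≤ i)
    (h : ttEntry A n i = some c) (hcn : c + 3 * t ≤ n) :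
    ∃ c' ≤ c + 3 * t, CanEnter A n t (i + 2 * t) c' := by
  induction t with
  | zero => exact ⟨c, le_rfl, canEnter_of_ttEntry h⟩
  | succ t ih =>
    obtain ⟨b, hbc, S, hS, hSt, hb⟩ := ih (fun a x ha hat => hA a x ha (by omega)) (by omega)
    have hAS : IsSignMatrix (i + 2 * t + 1) n (reorient A S) :=
      IsSignMatrix.reorient (fun a x ha hat => hA a x ha (by omega)) S
    obtain ⟨c', hcb', hc'⟩ := exists_canEnter_add_two hAS (by omega) hb (by omega)
    exact ⟨c', by omega, hc'.of_reorient hS hSt⟩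

theorem not_isNeighborly_of_ttEntry (hA : IsSignMatrix r n A) (hi : 1 ≤ i) (hir : i + 2 * t = r)
    (h : ttEntry A n i = some c) (hcn : c + 3 * t + 1 ≤ n) : ¬ IsNeighborly A r n (t + 1) := by
  subst hir
  obtain ⟨b, hbc, S, hS, hSt, hb⟩ := exists_canEnter_add_two_mul hA hi h (by omega)
  have h0 : reorient A S (i + 2 * t) b ≠ 0 :=
    (hA.reorient S).ne_zero ⟨by omega, le_rfl⟩ ⟨one_le_of_ttEntry_eq_some hb, by omega⟩
  have hlast : CanEnter (reorient A S) n 1 (i + 2 * t + 1) (b + 1) :=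
    canEnter_succ_of_const (by omega) hb (by omega) (by omega) h0 (by grind)
  exact (hlast.of_reorient hS hSt).not_isNeighborly

end CanEnter

/-- Let `k ≥ 1`, `r ≥ 2k+1`, `n ≥ 3k+1`, `A` an `r × n` sign matrix and `P` a
plain travel of `A` (with downward-move columns `D`).  If `P` makes a downward move from row
`r-2k+1` to row `r-2k+2` at a column `j ≤ n-3k+2` (i.e. `j` is the `(r-2k+1)`-th smallest
element of `D`), then `P` is not `k`-neighborly. -/
theorem statement_5 (k r n : ℕ) (hk : 1 ≤ k) (hr : 2 * k + 1 ≤ r) (hn : 3 * k + 1 ≤ n)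
    (A : ℕ → ℕ → ℤ) (hA : IsSignMatrix r n A)
    (D : Finset ℕ) (hD : IsPlainTravel r n D)
    (j : ℕ) (hjD : j ∈ D) (hrow : (D.filter (fun c => c ≤ j)).card = r - 2 * k + 1)
    (hj : j ≤ n - 3 * k + 2) :
    ¬ IsNeighborlyTravel A r n k D := by
  rintro ⟨R, -, hfollows, hneighborly⟩
  have hentry := hfollows.ttEntry_eq_some hjD
  rw [hrow] at hentry
  obtain ⟨t, rfl⟩ := Nat.exists_eq_add_of_le' hk
  exact not_isNeighborly_of_ttEntry (hA.reorient R) (by omega) (by omega) hentry (by omega)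
    hneighborly
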